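/- arXiv:1901.00832 — 4 statements merged into one kernel-verified Lean document; each statement's English description precedes it below -/
import Mathlib

section
/- Correctness of Paillier decryption: let N = pq with p, q distinct primes, let φ(N) = (p−1)(q−1), and assume gcd(N, φ(N)) = 1. Let m be a natural number with 0 ≤ m < N, let r be an integer coprime to N, and let c = (1+N)^m · r^N mod N². Then N divides (c^{φ(N)} mod N²) − 1, and ( ((c^{φ(N)} mod N²) − 1)/N ) · φ(N)^{−1} mod N = m, where φ(N)^{−1} denotes the multiplicative inverse of φ(N) modulo N. -/
/-! Modulo `N²`, the powers of `1 + N` are linear in the exponent: `(1 + N)^n ≡ 1 + nN`. Hence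
raising to the power `φ(N)` turns the factor `(1 + N)^m` of a ciphertext into `1 + mφ(N)N`, while it
removes the mask: by Euler `r^φ(N) ≡ 1` modulo `N`, and a further `N`-th power lifts this to
modulus `N²`. What is left, `1 + mφ(N)N` modulo `N²`, determines `mφ(N)` modulo `N`. -/

theorem one_add_pow_modEq_sq (a : ℤ) (n : ℕ) : (1 + a) ^ n ≡ 1 + n * a [ZMOD a ^ 2] := by
  refine (Int.modEq_of_dvd ?_).symm
  simpa only [one_pow, one_mul, sub_sub, mul_comm a, add_comm _ (1 : ℤ)] using
    sq_dvd_add_pow_sub_sub a 1 n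

theorem pow_self_modEq_sq {n : ℕ} {a b : ℤ} (h : a ≡ b [ZMOD n]) :
    a ^ n ≡ b ^ n [ZMOD (n : ℤ) ^ 2] := by
  refine (Int.modEq_of_dvd ?_).symm
  simpa only [pow_one, one_add_one_eq_two] using dvd_sub_pow_of_dvd_sub h.symm.dvd 1

theorem int_pow_totient_modEq_one {n : ℕ} {a : ℤ} (h : IsCoprime a n) :
    a ^ n.totient ≡ 1 [ZMOD n] := by
  rw [← ZMod.intCast_eq_intCast_iff, Int.cast_pow, Int.cast_one, ← ZMod.coe_unitOfIsCoprime a h,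
    ← Units.val_pow_eq_pow_val, ZMod.pow_totient, Units.val_one]

theorem totient_mul_of_primes {p q : ℕ} (hp : p.Prime) (hq : q.Prime) (hpq : p ≠ q) :
    (p * q).totient = (p - 1) * (q - 1) := by
  rw [Nat.totient_mul ((Nat.coprime_primes hp hq).2 hpq), Nat.totient_prime hp,
    Nat.totient_prime hq]

theorem dvd_sub_one_of_modEq_sq {a u x : ℤ} (h : u ≡ 1 + x * a [ZMOD a ^ 2]) : a ∣ u - 1 := by
  have hu : u ≡ 1 [ZMOD a] := by simpa using h.of_dvd (dvd_pow_self a two_ne_zero)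
  exact hu.symm.dvd

theorem sub_one_ediv_modEq {a u x : ℤ} (ha : a ≠ 0) (h : u ≡ 1 + x * a [ZMOD a ^ 2]) :
    (u - 1) / a ≡ x [ZMOD a] := by
  obtain ⟨y, hy⟩ := dvd_sub_one_of_modEq_sq h
  have hyx : a * y ≡ a * x [ZMOD a * a] := by
    rw [← hy, ← sq, mul_comm a x]
    simpa using h.sub_right 1
  rw [hy, Int.mul_ediv_cancel_left y ha]
  exact hyx.mul_left_cancel' ha

theorem paillier_ciphertext_pow_modEq {N k : ℕ} {r : ℤ} (hr : r ^ k ≡ 1 [ZMOD N]) (m : ℕ) :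
    ((1 + (N : ℤ)) ^ m * r ^ N) ^ k ≡ 1 + (m * k : ℕ) * N [ZMOD (N : ℤ) ^ 2] :=
  calc
    ((1 + (N : ℤ)) ^ m * r ^ N) ^ k = (1 + (N : ℤ)) ^ (m * k) * (r ^ k) ^ N := by ring
    _ ≡ (1 + (m * k : ℕ) * N) * 1 ^ N [ZMOD (N : ℤ) ^ 2] :=
      (one_add_pow_modEq_sq N (m * k)).mul (pow_self_modEq_sq hr)
    _ = 1 + (m * k : ℕ) * N := by rw [one_pow, mul_one]

theorem paillier_decryption_correct_general {N k : ℕ} (hN : N ≠ 0) (hNk : N.Coprime k) {r : ℤ}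
    (hr : r ^ k ≡ 1 [ZMOD N]) {m : ℕ} {c : ℤ}
    (hc : c ≡ (1 + (N : ℤ)) ^ m * r ^ N [ZMOD (N : ℤ) ^ 2]) :
    (N : ℤ) ∣ (c ^ k % ((N : ℤ) ^ 2)) - 1 ∧
      ((((c ^ k % ((N : ℤ) ^ 2)) - 1) / (N : ℤ) : ℤ) : ZMod N) * (k : ZMod N)⁻¹
        = (m : ZMod N) := by
  have hck : c ^ k % (N : ℤ) ^ 2 ≡ 1 + (m * k : ℕ) * N [ZMOD (N : ℤ) ^ 2] :=
    (Int.mod_modEq _ _).trans ((hc.pow k).trans (paillier_ciphertext_pow_modEq hr m))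
  have hlog : (((c ^ k % (N : ℤ) ^ 2 - 1) / N : ℤ) : ZMod N) = m * k := by
    simpa using (ZMod.intCast_eq_intCast_iff _ _ N).2
      (sub_one_ediv_modEq (Int.natCast_ne_zero.2 hN) hck)
  refine ⟨dvd_sub_one_of_modEq_sq hck, ?_⟩
  rw [hlog, mul_assoc, ZMod.coe_mul_inv_eq_one k hNk.symm, mul_one]

/-- Correctness of Paillier decryption: with `N = pq` (`p, q` distinct primes),
`φ = (p−1)(q−1)`, `gcd(N, φ) = 1`, a message `0 ≤ m < N`, randomness `r`
coprime to `N`, and ciphertext `c = (1+N)^m · r^N mod N²`, we have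
`N ∣ (c^φ mod N²) − 1` and `((c^φ mod N²) − 1)/N · φ⁻¹ ≡ m (mod N)`. -/
theorem paillier_decryption_correct (p q : ℕ) (hp : p.Prime) (hq : q.Prime) (hpq : p ≠ q)
    (N φ : ℕ) (hN : N = p * q) (hφ : φ = (p - 1) * (q - 1)) (hgcd : Nat.gcd N φ = 1)
    (m : ℕ) (hm : m < N) (r : ℤ) (hr : IsCoprime r (N : ℤ))
    (c : ℤ) (hc : c = ((1 + (N : ℤ)) ^ m * r ^ N) % ((N : ℤ) ^ 2)) :
    (N : ℤ) ∣ (c ^ φ % ((N : ℤ) ^ 2)) - 1 ∧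
      ((((c ^ φ % ((N : ℤ) ^ 2)) - 1) / (N : ℤ) : ℤ) : ZMod N) * (φ : ZMod N)⁻¹
        = (m : ZMod N) := by
  obtain rfl : φ = N.totient := by rw [hφ, hN, totient_mul_of_primes hp hq hpq]
  exact paillier_decryption_correct_general (Nat.ne_zero_of_lt hm) hgcd
    (int_pow_totient_modEq_one hr) (hc ▸ Int.mod_modEq _ _)
end

section
/- Scalar multiplication homomorphism of Paillier ciphertexts: let N = pq with p, q distinct primes, let m and k be natural numbers and r an integer coprime to N. Then ((1+N)^m · r^N)^k ≡ (1+N)^{(k·m) mod N} · (r^k)^N (mod N²); that is, raising a Paillier encryption of m to the k-th power yields a Paillier encryption of (k·m) mod N with randomness r^k. -/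
/-!
In `ZMod (N ^ 2)` the binomial expansion of `(1 + N) ^ N` stops at its linear term, leaving
`1 + N * N = 1`, so exponents of `1 + N` only matter modulo `N`.
-/

theorem one_add_pow_of_sq_eq_zero {R : Type*} [CommSemiring R] {x : R} (hx : x ^ 2 = 0) (n : ℕ) :
    (1 + x) ^ n = 1 + n * x := by
  simpa [Polynomial.derivative_X_pow] using (Polynomial.X ^ n).eval_add_of_sq_eq_zero 1 x hx

theorem one_add_natCast_pow_self {R : Type*} [CommSemiring R] {N : ℕ} (hN : (N : R) ^ 2 = 0) :
    (1 + (N : R)) ^ N = 1 := by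
  rw [one_add_pow_of_sq_eq_zero hN, ← sq, hN, add_zero]

theorem paillier_scalar_homomorphism_general {R : Type*} [CommSemiring R] {N : ℕ}
    (hN : (N : R) ^ 2 = 0) (m k : ℕ) (r : R) :
    ((1 + (N : R)) ^ m * r ^ N) ^ k = (1 + (N : R)) ^ ((k * m) % N) * (r ^ k) ^ N :=
  calc ((1 + (N : R)) ^ m * r ^ N) ^ k = (1 + (N : R)) ^ (k * m) * (r ^ k) ^ N := by
        rw [mul_pow, pow_right_comm r, ← pow_mul, mul_comm m]
    _ = (1 + (N : R)) ^ ((k * m) % N) * (r ^ k) ^ N := by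
        rw [pow_eq_pow_mod (k * m) (one_add_natCast_pow_self hN)]

/-- Scalar multiplication homomorphism of Paillier ciphertexts: the `k`-th power
of an encryption of `m` is an encryption of `(k·m) mod N` with randomness `r^k`. -/
theorem paillier_scalar_homomorphism (p q : ℕ) (hp : p.Prime) (hq : q.Prime) (hpq : p ≠ q)
    (N : ℕ) (hN : N = p * q) (m k : ℕ) (r : ℤ) (hr : IsCoprime r (N : ℤ)) :
    ((1 + (N : ℤ)) ^ m * r ^ N) ^ k ≡
      (1 + (N : ℤ)) ^ ((k * m) % N) * (r ^ k) ^ N [ZMOD ((N : ℤ) ^ 2)] := by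
  have natCast_sq_eq_zero : (N : ZMod (N ^ 2)) ^ 2 = 0 := mod_cast ZMod.natCast_self (N ^ 2)
  exact mod_cast (ZMod.intCast_eq_intCast_iff _ _ (N ^ 2)).1
    (mod_cast paillier_scalar_homomorphism_general natCast_sq_eq_zero m k r)
end

section
/- Let N = pq with p, q distinct primes and assume gcd(N, φ(N)) = 1, where φ(N) = (p−1)(q−1). Then the map (m, r) ↦ (1+N)^m · r^N, from (ℤ/Nℤ) × (ℤ/Nℤ)^× to the group of units of ℤ/N²ℤ, is a bijection. -/
/-!
Reduction modulo `N` maps `(ℤ/N²ℤ)ˣ` onto `(ℤ/Nℤ)ˣ`. Since `N² = 0` in `ℤ/N²ℤ`, we have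
`(1 + N)^m = 1 + mN`, so the powers of `1 + N` run exactly once through the kernel as `m` runs
through `ℤ/Nℤ`. The ciphertext `(1 + N)^m r^N` reduces to `r^N`, and `r ↦ r^N` permutes `(ℤ/Nℤ)ˣ`
because `N` is prime to the order `φ(N)` of that group. Hence the elements `r^N` represent each
coset of the kernel exactly once.
-/

namespace Paillier

theorem bijective_mul_of_bijOn_ker {G H α β : Type*} [Group G] [Group H] (f : G →* H)
    {κ : α → G} {σ : β → G} (hκ : Set.BijOn κ Set.univ f.ker)
    (hσ : Function.Bijective fun b ↦ f (σ b)) :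
    Function.Bijective fun x : α × β ↦ κ x.1 * σ x.2 := by
  have map_κ (a : α) : f (κ a) = 1 := hκ.mapsTo (Set.mem_univ a)
  refine ⟨?_, fun g ↦ ?_⟩
  · rintro ⟨a, b⟩ ⟨a', b'⟩ (h : κ a * σ b = κ a' * σ b')
    obtain rfl : b = b' := hσ.injective <| by simpa [map_κ] using congrArg f h
    obtain rfl : a = a' := Set.injOn_univ.1 hκ.injOn (mul_right_cancel h)
    rfl
  · obtain ⟨b, hb : f (σ b) = f g⟩ := hσ.surjective (f g)
    have hker : g * (σ b)⁻¹ ∈ f.ker := by simp [MonoidHom.mem_ker, hb]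
    obtain ⟨a, -, ha⟩ := hκ.surjOn hker
    exact ⟨(a, b), by simp [ha]⟩

theorem one_add_pow_of_sq_eq_zero {R : Type*} [CommSemiring R] {ε : R} (hε : ε ^ 2 = 0) (k : ℕ) :
    (1 + ε) ^ k = 1 + k * ε := by
  simpa [Polynomial.derivative_X_pow] using
    (Polynomial.X ^ k : Polynomial R).eval_add_of_sq_eq_zero 1 ε hε

theorem castHom_eq_zero_iff_dvd {m n : ℕ} (h : n ∣ m) (x : ZMod m) :
    ZMod.castHom h (ZMod n) x = 0 ↔ (n : ZMod m) ∣ x := by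
  constructor
  · obtain ⟨z, rfl⟩ := ZMod.intCast_surjective x
    rw [map_intCast, ZMod.intCast_zmod_eq_zero_iff_dvd]
    exact fun hz ↦ by simpa using map_dvd (Int.castRingHom (ZMod m)) hz
  · rintro ⟨c, rfl⟩
    rw [map_mul, map_natCast, ZMod.natCast_self, zero_mul]

theorem mem_ker_unitsMap_iff_dvd {m n : ℕ} (h : n ∣ m) (u : (ZMod m)ˣ) :
    u ∈ (ZMod.unitsMap h).ker ↔ (n : ZMod m) ∣ u - 1 := by
  rw [← castHom_eq_zero_iff_dvd h, map_sub, map_one, sub_eq_zero, MonoidHom.mem_ker,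
    Units.ext_iff]
  rfl

theorem one_add_natCast_pow (N k : ℕ) : (1 + (N : ZMod (N ^ 2))) ^ k = 1 + k * N :=
  one_add_pow_of_sq_eq_zero (by exact_mod_cast ZMod.natCast_self (N ^ 2)) k

theorem one_add_natCast_pow_inj {N : ℕ} [NeZero N] {a b : ℕ} :
    (1 + (N : ZMod (N ^ 2))) ^ a = (1 + (N : ZMod (N ^ 2))) ^ b ↔ a ≡ b [MOD N] := by
  calc (1 + (N : ZMod (N ^ 2))) ^ a = (1 + (N : ZMod (N ^ 2))) ^ b
      ↔ ((a * N : ℕ) : ZMod (N ^ 2)) = (b * N : ℕ) := by simp [one_add_natCast_pow]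
    _ ↔ a * N ≡ b * N [MOD N * N] := by rw [ZMod.natCast_eq_natCast_iff, sq]
    _ ↔ a ≡ b [MOD N] := Nat.ModEq.mul_right_cancel_iff' (NeZero.ne N)

/-- The base `1 + N` of Paillier encryption, as a unit modulo `N²`. -/
def base (N : ℕ) : (ZMod (N ^ 2))ˣ :=
  ZMod.unitOfCoprime (1 + N) (by simp)

@[simp]
theorem coe_base (N : ℕ) : (base N : ZMod (N ^ 2)) = 1 + N := by
  simp [base]

theorem bijOn_base_pow_ker (N : ℕ) [NeZero N] :
    Set.BijOn (fun m : ZMod N ↦ base N ^ m.val) Set.univ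
      (ZMod.unitsMap (dvd_pow_self N two_ne_zero)).ker := by
  refine ⟨fun m _ ↦ ?_, fun m _ m' _ h ↦ ?_, fun u hu ↦ ?_⟩
  · rw [SetLike.mem_coe, mem_ker_unitsMap_iff_dvd]
    simp [one_add_natCast_pow]
  · have hpow := congrArg Units.val h
    simp only [Units.val_pow_eq_pow_val, coe_base, one_add_natCast_pow_inj,
      ← ZMod.natCast_eq_natCast_iff, ZMod.natCast_zmod_val] at hpow
    exact hpow
  · obtain ⟨c, hc⟩ := (mem_ker_unitsMap_iff_dvd _ u).1 hu
    refine ⟨(c.val : ZMod N), Set.mem_univ _, Units.ext ?_⟩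
    calc ((base N ^ (c.val : ZMod N).val : (ZMod (N ^ 2))ˣ) : ZMod (N ^ 2))
        = (1 + (N : ZMod (N ^ 2))) ^ (c.val : ZMod N).val := by simp
      _ = (1 + (N : ZMod (N ^ 2))) ^ c.val := by
        rw [one_add_natCast_pow_inj, ← ZMod.natCast_eq_natCast_iff, ZMod.natCast_zmod_val]
      _ = 1 + N * c := by rw [one_add_natCast_pow, ZMod.natCast_zmod_val, mul_comm]
      _ = u := by rw [← hc, add_sub_cancel]

section UnitLift

variable {N : ℕ}

/-- The randomness `r ∈ (ℤ/Nℤ)ˣ`, read as a unit modulo `N²` through its least nonnegative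
representative. This lift is not multiplicative. -/
def unitLift (r : (ZMod N)ˣ) : (ZMod (N ^ 2))ˣ :=
  ZMod.unitOfCoprime (r : ZMod N).val ((ZMod.val_coe_unit_coprime r).pow_right 2)

@[simp]
theorem coe_unitLift (r : (ZMod N)ˣ) : (unitLift r : ZMod (N ^ 2)) = (r : ZMod N).val :=
  rfl

theorem unitsMap_unitLift [NeZero N] (r : (ZMod N)ˣ) :
    ZMod.unitsMap (dvd_pow_self N two_ne_zero) (unitLift r) = r := by
  ext
  simp [ZMod.unitsMap_def, -ZMod.castHom_apply]

theorem bijective_unitsMap_unitLift_pow [NeZero N] {e : ℕ} (he : e.Coprime N.totient) :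
    Function.Bijective fun r : (ZMod N)ˣ ↦
      ZMod.unitsMap (dvd_pow_self N two_ne_zero) (unitLift r ^ e) := by
  have hcard : (Nat.card (ZMod N)ˣ).Coprime e := by
    rw [Nat.card_eq_fintype_card, ZMod.card_units_eq_totient]
    exact he.symm
  simp only [map_pow, unitsMap_unitLift]
  exact (powCoprime hcard).bijective

end UnitLift

theorem totient_prime_mul_prime {p q : ℕ} (hp : p.Prime) (hq : q.Prime) (hpq : p ≠ q) :
    (p * q).totient = (p - 1) * (q - 1) := by
  rw [Nat.totient_mul ((Nat.coprime_primes hp hq).2 hpq), Nat.totient_prime hp,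
    Nat.totient_prime hq]

end Paillier

open Paillier in
theorem paillier_encryption_bijective_general (N e : ℕ) [NeZero N] (he : e.Coprime N.totient) :
    ∀ u : (ZMod (N ^ 2))ˣ, ∃! x : ZMod N × (ZMod N)ˣ,
      (u : ZMod (N ^ 2)) =
        (1 + (N : ZMod (N ^ 2))) ^ x.1.val * ((x.2 : ZMod N).val : ZMod (N ^ 2)) ^ e := by
  have hbij : Function.Bijective fun x : ZMod N × (ZMod N)ˣ ↦
      base N ^ x.1.val * unitLift x.2 ^ e :=
    bijective_mul_of_bijOn_ker _ (bijOn_base_pow_ker N) (bijective_unitsMap_unitLift_pow he)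
  intro u
  simpa [Units.ext_iff, eq_comm] using hbij.existsUnique u

/-- The Paillier encryption map `(m, r) ↦ (1+N)^m · r^N` from
`(ℤ/Nℤ) × (ℤ/Nℤ)ˣ` to the units of `ℤ/N²ℤ` is a bijection, when `N = pq`
for distinct primes `p, q` with `gcd(N, φ(N)) = 1`. -/
theorem paillier_encryption_bijective (p q : ℕ) (hp : p.Prime) (hq : q.Prime) (hpq : p ≠ q)
    (N : ℕ) (hN : N = p * q) (hgcd : Nat.gcd N ((p - 1) * (q - 1)) = 1) :
    ∀ u : (ZMod (N ^ 2))ˣ, ∃! x : ZMod N × (ZMod N)ˣ,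
      (u : ZMod (N ^ 2)) =
        (1 + (N : ZMod (N ^ 2))) ^ x.1.val * (((x.2 : ZMod N).val : ZMod (N ^ 2))) ^ N := by
  have : NeZero N := ⟨hN ▸ mul_ne_zero hp.ne_zero hq.ne_zero⟩
  rw [← Paillier.totient_prime_mul_prime hp hq hpq, ← hN] at hgcd
  exact paillier_encryption_bijective_general N N hgcd
end

section
/- Homomorphic evaluation of Round 2: let N = pq with p, q distinct primes, let n be a natural number, let c : Fin n → ℕ with c i ≤ 1 for all i, let f : Fin n → ℕ with f i ≤ 1 for all i, and for each i let r i be an integer coprime to N and E i = (1+N)^{c i} · (r i)^N mod N² be a Paillier encryption of c i. Then Π_{i=1}^{n} (E i)^{f i} ≡ (1+N)^{(Σ_{i=1}^{n} f i · c i) mod N} · (Π_{i=1}^{n} (r i)^{f i})^N (mod N²); that is, the product of the ciphertexts E i raised to the powers f i is a Paillier encryption of (Σ_i f_i·c_i) mod N. -/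
/-!
The expression `(1 + N) ^ m * r ^ N` is multiplicative in the pair `(m, r)`, messages being added
and random factors multiplied. Since `N ∣ (1 + N) - 1`, raising to the power `N` gains one more
factor of `N`, so `(1 + N) ^ N = 1` wherever `N ^ 2 = 0`, and the message only matters modulo `N`.
-/

/-- Paillier encryption of the message `m` with randomness `r` under the public key `N`. The
ciphertext ring `ℤ / N²` is replaced by an arbitrary `R`, and `r` need not be a unit. -/
def paillierEncrypt {R : Type*} [CommSemiring R] (N m : ℕ) (r : R) : R :=
  (1 + (N : R)) ^ m * r ^ N

section CommSemiring

variable {R : Type*} [CommSemiring R] (N : ℕ)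

theorem paillierEncrypt_pow (m k : ℕ) (r : R) :
    paillierEncrypt N m r ^ k = paillierEncrypt N (k * m) (r ^ k) := by
  rw [paillierEncrypt, paillierEncrypt, mul_pow, ← pow_mul', pow_right_comm]

theorem prod_paillierEncrypt {ι : Type*} (s : Finset ι) (m : ι → ℕ) (r : ι → R) :
    ∏ i ∈ s, paillierEncrypt N (m i) (r i) = paillierEncrypt N (∑ i ∈ s, m i) (∏ i ∈ s, r i) := by
  simp only [paillierEncrypt, Finset.prod_mul_distrib, Finset.prod_pow_eq_pow_sum, Finset.prod_pow]

end CommSemiring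

section CommRing

variable {R : Type*} [CommRing R] {N : ℕ}

theorem one_add_natCast_pow_self_eq_one (hN : (N : R) ^ 2 = 0) : (1 + (N : R)) ^ N = 1 := by
  have hdvd : (N : R) ∣ (1 + N) - 1 := by rw [add_sub_cancel_left]
  have hsq : (N : R) ^ 2 ∣ (1 + N) ^ N - 1 := by
    simpa only [pow_one, one_pow] using dvd_sub_pow_of_dvd_sub hdvd 1
  rwa [hN, zero_dvd_iff, sub_eq_zero] at hsq

theorem paillierEncrypt_eq_of_modEq (hN : (N : R) ^ 2 = 0) {m₁ m₂ : ℕ} (h : m₁ ≡ m₂ [MOD N])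
    (r : R) : paillierEncrypt N m₁ r = paillierEncrypt N m₂ r := by
  rw [paillierEncrypt, paillierEncrypt,
    pow_eq_pow_of_modEq h (one_add_natCast_pow_self_eq_one hN)]

theorem paillier_round_two_general (hN : (N : R) ^ 2 = 0) {ι : Type*} (s : Finset ι)
    (c f : ι → ℕ) (r : ι → R) {m : ℕ} (hm : m ≡ ∑ i ∈ s, f i * c i [MOD N]) :
    ∏ i ∈ s, paillierEncrypt N (c i) (r i) ^ f i = paillierEncrypt N m (∏ i ∈ s, r i ^ f i) := by
  simp only [paillierEncrypt_pow, prod_paillierEncrypt, paillierEncrypt_eq_of_modEq hN hm]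

end CommRing

theorem zmod_natCast_sq_eq_zero (N : ℕ) : (N : ZMod (N ^ 2)) ^ 2 = 0 := by
  exact_mod_cast ZMod.natCast_self (N ^ 2)

theorem zmod_intCast_emod_sq (N : ℕ) (a : ℤ) :
    ((a % (N : ℤ) ^ 2 : ℤ) : ZMod (N ^ 2)) = a := by
  exact_mod_cast ZMod.intCast_mod a (N ^ 2)

/-- Homomorphic evaluation of Round 2: the product of Alice's Paillier
ciphertexts `E i` raised to the powers `f i` is a Paillier encryption of
`(Σ_i f i · c i) mod N` with randomness `Π_i (r i)^(f i)`. -/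
theorem paillier_round_two (p q : ℕ) (hp : p.Prime) (hq : q.Prime) (hpq : p ≠ q)
    (N : ℕ) (hN : N = p * q) (n : ℕ) (c f : Fin n → ℕ)
    (hc : ∀ i, c i ≤ 1) (hf : ∀ i, f i ≤ 1)
    (r : Fin n → ℤ) (hr : ∀ i, IsCoprime (r i) (N : ℤ))
    (E : Fin n → ℤ)
    (hE : ∀ i, E i = ((1 + (N : ℤ)) ^ (c i) * (r i) ^ N) % ((N : ℤ) ^ 2)) :
    (∏ i, (E i) ^ (f i)) ≡
      (1 + (N : ℤ)) ^ ((∑ i, f i * c i) % N) * (∏ i, (r i) ^ (f i)) ^ N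
        [ZMOD ((N : ℤ) ^ 2)] := by
  rw [← Nat.cast_pow, ← ZMod.intCast_eq_intCast_iff]
  simpa [hE, zmod_intCast_emod_sq, paillierEncrypt] using
    paillier_round_two_general (zmod_natCast_sq_eq_zero N) Finset.univ c f
      (fun i ↦ (r i : ZMod (N ^ 2))) (Nat.mod_modEq _ N)
end
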